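/- arXiv:2109.00738 — 2 statements merged into one kernel-verified Lean document; each statement's English description precedes it below -/
import Mathlib

section
/- For each m ∈ {0, 1, 2} there exist polynomials B, C ∈ ℚ[X] with B ≠ 0, deg B ≤ 2 and C monic of degree 3, such that the Weierstrass equation Y² = X³ + α₂(T)X² + α₄(T)X + α₆(T) determined by the identity X³ + α₂(T)X² + α₄(T)X + α₆(T) = B(X)T + C(X) has nonzero discriminant in ℚ(T) and the resulting elliptic curve E over ℚ(T) has rank r_E = m. -/
open Polynomial UniqueFactorizationMonoid
open scoped TensorProduct

noncomputable section
attribute [local instance] Classical.propDecidable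

/-- The coefficient `αᵢ ∈ ℚ[T]` of `Xⁱ` in `A(X)T² + B(X)T + C(X)`. -/
def alph (A B C : ℚ[X]) (i : ℕ) : ℚ[X] :=
  Polynomial.C (A.coeff i) * Polynomial.X ^ 2 + Polynomial.C (B.coeff i) * Polynomial.X +
    Polynomial.C (C.coeff i)

/-- The Weierstrass curve `Y² = X³ + α₂(T)X² + α₄(T)X + α₆(T)` over `ℚ(T)`,
i.e. `Y² = A(X)T² + B(X)T + C(X)`. -/
def surfW (A B C : ℚ[X]) : WeierstrassCurve (RatFunc ℚ) where
  a₁ := 0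
  a₂ := algebraMap (Polynomial ℚ) (RatFunc ℚ) (alph A B C 2)
  a₃ := 0
  a₄ := algebraMap (Polynomial ℚ) (RatFunc ℚ) (alph A B C 1)
  a₆ := algebraMap (Polynomial ℚ) (RatFunc ℚ) (alph A B C 0)

/-- The rank of a Weierstrass curve over `ℚ(T)`: `dim_ℚ (E(ℚ(T)) ⊗_ℤ ℚ)`. -/
def rankW (W : WeierstrassCurve (RatFunc ℚ)) : ℕ :=
  Module.finrank ℚ (ℚ ⊗[ℤ] W.toAffine.Point)

namespace RankAux
open WeierstrassCurve.Affine
section ideals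
variable {F : Type*} [Field F] {W : WeierstrassCurve.Affine F}

/-- The ideal of a point in the affine coordinate ring. -/
def idl : W.Point → Ideal W.CoordinateRing
  | .zero => ⊤
  | .some x y _ => CoordinateRing.XYIdeal W x (C y)

lemma idl_mul_neg (P : W.Point) :
    ∃ ξ : W.CoordinateRing, ξ ≠ 0 ∧ idl (-P) * idl P = Ideal.span {ξ} := by
  rcases P with _ | ⟨x, y, h⟩
  · exact ⟨1, one_ne_zero, by
      rw [show (-(Point.zero : W.Point)) = Point.zero from rfl]; simp [idl]⟩
  · refine ⟨_, CoordinateRing.XClass_ne_zero x, ?_⟩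
    rw [Point.neg_some]
    exact CoordinateRing.XYIdeal_neg_mul h

lemma idl_max (P : W.Point) : idl P = ⊤ ∨ (idl P).IsMaximal := by
  rcases P with _ | ⟨x, y, h⟩
  · exact Or.inl rfl
  · right
    have e := CoordinateRing.quotientXYIdealEquiv (W' := W) (x := x) (y := C y) h.1
    exact Ideal.Quotient.maximal_of_isField _
      (MulEquiv.isField (Field.toIsField F) e.toMulEquiv)

lemma idl_dvd (P : W.Point) {J : Ideal W.CoordinateRing} (h : J ≤ idl P) :
    ∃ J', J = idl P * J' := by
  obtain ⟨ξ, h0, hξ⟩ := idl_mul_neg P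
  have h1 : J * idl (-P) ≤ Ideal.span {ξ} := by
    rw [← hξ, mul_comm]; exact Ideal.mul_mono_right h
  let J' : Ideal W.CoordinateRing := Submodule.comap (LinearMap.mulLeft W.CoordinateRing ξ) (J * idl (-P))
  have h2 : J * idl (-P) = Ideal.span {ξ} * J' := by
    apply le_antisymm
    · rw [Ideal.le_span_singleton_mul_iff]
      intro z hz
      obtain ⟨w, hw⟩ := Ideal.mem_span_singleton.mp (h1 hz)
      refine ⟨w, ?_, hw.symm⟩
      change ξ * w ∈ J * idl (-P)
      rw [← hw]; exact hz
    · rw [Ideal.span_singleton_mul_le_iff]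
      exact fun z hz => hz
  refine ⟨J', ?_⟩
  rw [← Ideal.span_singleton_mul_right_inj h0, mul_left_comm, ← h2, ← hξ]
  ring

lemma idl_cancel (P : W.Point) {A J : Ideal W.CoordinateRing} (h : idl P * A ≤ idl P * J) :
    A ≤ J := by
  obtain ⟨ξ, h0, hξ⟩ := idl_mul_neg P
  rw [← Ideal.span_singleton_mul_right_mono h0, ← hξ, mul_assoc, mul_assoc]
  exact Ideal.mul_mono_right h

lemma idl_prod (H : AddSubgroup W.Point) (n : ℕ) : ∀ (l : List W.Point) (J : Ideal W.CoordinateRing),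
    l.length = n → (∀ P ∈ l, P ∈ H) → (l.map idl).prod ≤ J →
    ∃ l' : List W.Point, (∀ P ∈ l', P ∈ H) ∧ J = (l'.map idl).prod := by
  induction n with
  | zero =>
    intro l J hl _ hJ
    rw [List.length_eq_zero_iff] at hl
    subst hl
    refine ⟨[], by simp, ?_⟩
    simpa using hJ
  | succ n ih =>
    intro l J hl hH hJ
    by_cases hT : J = ⊤
    · exact ⟨[], by simp, by simpa using hT⟩
    obtain ⟨M, hM, hJM⟩ := Ideal.exists_le_maximal J hT
    have hp := hM.isPrime
    obtain ⟨P, hPl, hPM⟩ : ∃ P ∈ l, idl P ≤ M := by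
      have := hJ.trans hJM
      clear hJ hl ih hH
      induction l with
      | nil => exact absurd (by simpa using this) hM.ne_top
      | cons a l ih =>
        rw [List.map_cons, List.prod_cons] at this
        rcases hp.mul_le.mp this with h | h
        · exact ⟨a, by simp, h⟩
        · obtain ⟨P, h1, h2⟩ := ih h
          exact ⟨P, by simp [h1], h2⟩
    have hPe : idl P = M := by
      rcases idl_max P with h | h
      · rw [h] at hPM
        exact absurd (top_le_iff.mp hPM) hM.ne_top
      · exact h.eq_of_le hM.ne_top hPM
    obtain ⟨J', rfl⟩ := idl_dvd P (hJM.trans hPe.ge)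
    have hperm := List.perm_cons_erase hPl
    rw [(hperm.map idl).prod_eq, List.map_cons, List.prod_cons] at hJ
    obtain ⟨l', h1, h2⟩ := ih (l.erase P) J' (by rw [List.length_erase_of_mem hPl, hl]; rfl)
      (fun Q hQ => hH Q (List.mem_of_mem_erase hQ)) (idl_cancel P hJ)
    refine ⟨P :: l', ?_, ?_⟩
    · intro Q hQ
      rcases List.mem_cons.mp hQ with rfl | hQ
      · exact hH _ hPl
      · exact h1 _ hQ
    · rw [List.map_cons, List.prod_cons, ← h2]

/-- The unit fractional ideal of a point. -/
def uid : W.Point → (FractionalIdeal (nonZeroDivisors W.CoordinateRing) W.FunctionField)ˣ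
  | .zero => 1
  | .some _ _ h => CoordinateRing.XYIdeal' h

lemma coe_uid (P : W.Point) : (uid P :
    FractionalIdeal (nonZeroDivisors W.CoordinateRing) W.FunctionField) = idl P := by
  rcases P with _ | ⟨x, y, h⟩
  · simp [uid, idl]
  · rfl

lemma mk_uid (P : W.Point) : Point.toClass P = Additive.ofMul (ClassGroup.mk W.FunctionField (uid P)) := by
  rcases P with _ | ⟨x, y, h⟩
  · simp only [uid, map_one]; rfl
  · rfl

lemma sum_eq_zero (l : List W.Point) {γ : W.CoordinateRing} (hγ : γ ≠ 0)
    (h : (l.map idl).prod = Ideal.span {γ}) : l.sum = 0 := by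
  have h1 : ((l.map uid).prod : FractionalIdeal (nonZeroDivisors W.CoordinateRing) W.FunctionField)
      = ((l.map idl).prod : Ideal W.CoordinateRing) := by
    clear h
    induction l with
    | nil => simp
    | cons a l ih => simp [ih, coe_uid]
  have h2 : Point.toClass l.sum = Additive.ofMul (ClassGroup.mk W.FunctionField (l.map uid).prod) := by
    clear h h1
    induction l with
    | nil => simp
    | cons a l ih => rw [List.sum_cons, map_add, ih, mk_uid, List.map_cons, List.prod_cons, map_mul, ofMul_mul]
  rw [← Point.toClass_eq_zero, h2, (ClassGroup.mk_eq_one_of_coe_ideal h1).mpr ⟨γ, hγ, h⟩]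
  rfl

end ideals
/-- Principal kernel lemma (Gauss). -/
lemma ker_principal {D K : Type*} [CommRing D] [IsDomain D] [UniqueFactorizationMonoid D] [Field K]
    (f : D →+* K) (hf : Function.Injective f) (y : K) (hy : ∃ q : D[X], q ≠ 0 ∧ eval₂ f y q = 0) :
    ∃ g : D[X], eval₂ f y g = 0 ∧ ∀ h : D[X], eval₂ f y h = 0 → g ∣ h := by
  obtain ⟨q, hq0, hq⟩ := hy
  let p : Ideal D[X] := RingHom.ker (eval₂RingHom f y)
  have hp : p.IsPrime := RingHom.ker_isPrime _
  have hpb : p ≠ ⊥ := fun h => hq0 (by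
    have : q ∈ p := hq
    rw [h] at this; simpa using this)
  obtain ⟨g, hgp, hg⟩ := hp.exists_mem_prime_of_ne_bot hpb
  have hg0 : eval₂ f y g = 0 := hgp
  refine ⟨g, hg0, fun h hh => ?_⟩
  have hdeg : g.natDegree ≠ 0 := by
    intro hd
    rw [eq_C_of_natDegree_eq_zero hd, eval₂_C, ← map_zero f] at hg0
    have := hf hg0
    apply hg.ne_zero
    rw [eq_C_of_natDegree_eq_zero hd, this, C_0]
  let := UniqueFactorizationMonoid.toGCDMonoid D
  have hprim := hg.irreducible.isPrimitive hdeg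
  let F := FractionRing D
  let : Algebra D K := f.toAlgebra
  let : Algebra F K := (IsFractionRing.lift hf).toAlgebra
  have : IsScalarTower D F K := IsScalarTower.of_algebraMap_eq fun x =>
    (IsFractionRing.lift_algebraMap hf x).symm
  have hirr := (hprim.irreducible_iff_irreducible_map_fraction_map (K := F)).mp hg.irreducible
  refine hprim.dvd_of_fraction_map_dvd_fraction_map (K := F) ?_
  have h1 : aeval y (g.map (algebraMap D F)) = 0 := by rw [aeval_map_algebraMap]; exact hg0
  have h2 : aeval y (h.map (algebraMap D F)) = 0 := by rw [aeval_map_algebraMap]; exact hh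
  have h3 := minpoly.dvd F y h2
  have h4 := minpoly.dvd F y h1
  have hi : IsIntegral F y := IsAlgebraic.isIntegral ⟨_, hirr.ne_zero, h1⟩
  exact ((minpoly.irreducible hi).associated_of_dvd hirr h4).dvd_iff_dvd_left.mp h3

open IntermediateField.algebraAdjoinAdjoin in
lemma x_alg {k : Type*} [Field k] (x y : RatFunc k) (hx : ¬ ∃ c, x = RatFunc.C c) :
    ∃ g : k[X][X], eval₂ (eval₂RingHom RatFunc.C x) y g = 0 ∧
      ∀ h : k[X][X], eval₂ (eval₂RingHom RatFunc.C x) y h = 0 → g ∣ h := by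
  have ht := RatFunc.transcendental_of_ne_C x hx
  have ha := RatFunc.isAlgebraic_adjoin_simple_X' x hx
  have hfa : ∀ p : k[X], eval₂RingHom RatFunc.C x p = aeval x p := fun p => rfl
  refine ker_principal _ (transcendental_iff_injective.mp ht) y ?_
  have h1 : IsAlgebraic (Algebra.adjoin k {x}) y :=
    (IsFractionRing.isAlgebraic_iff (Algebra.adjoin k {x}) (IntermediateField.adjoin k {x}) _).mpr
      (ha.isAlgebraic y)
  obtain ⟨q, hq, hqy⟩ := h1
  let e := Polynomial.algEquivOfTranscendental k x ht
  refine ⟨q.map (e.symm : Algebra.adjoin k {x} →+* k[X]), ?_, ?_⟩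
  · rw [Ne, Polynomial.map_eq_zero_iff]
    · exact hq
    · exact e.symm.injective
  · rw [eval₂_map, ← hqy, aeval_def]
    congr 1
    ext1 z
    obtain ⟨p, rfl⟩ := e.surjective z
    simp [e]

section surf

/-- Evaluation of rational polynomials at an element of `ℚ(T)`. -/
abbrev ev (x : RatFunc ℚ) : ℚ[X] →+* RatFunc ℚ := eval₂RingHom RatFunc.C x

lemma algMap_alph (B C : ℚ[X]) (i : ℕ) :
    algebraMap ℚ[X] (RatFunc ℚ) (alph 0 B C i) =
      RatFunc.C (B.coeff i) * RatFunc.X + RatFunc.C (C.coeff i) := by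
  simp [alph, RatFunc.algebraMap_C, RatFunc.algebraMap_X]

lemma eval_quad {R : Type*} [CommRing R] (f : ℚ →+* R) (x : R) {B : ℚ[X]} (hB : B.natDegree ≤ 2) :
    eval₂ f x B = f (B.coeff 0) + f (B.coeff 1) * x + f (B.coeff 2) * x ^ 2 := by
  rw [eval₂_eq_sum_range' f (show B.natDegree < 3 by omega)]
  simp [Finset.sum_range_succ]

lemma eval_cubic {R : Type*} [CommRing R] (f : ℚ →+* R) (x : R) {C : ℚ[X]} (hC : C.Monic)
    (hC' : C.natDegree = 3) :
    eval₂ f x C = f (C.coeff 0) + f (C.coeff 1) * x + f (C.coeff 2) * x ^ 2 + x ^ 3 := by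
  have h3 : C.coeff 3 = 1 := by rw [← hC']; exact hC
  rw [eval₂_eq_sum_range' f (show C.natDegree < 4 by omega)]
  simp [Finset.sum_range_succ, h3]

variable {B C : ℚ[X]}

lemma surf_eqn (hB : B.natDegree ≤ 2) (hC : C.Monic) (hC' : C.natDegree = 3) (x y : RatFunc ℚ) :
    (surfW 0 B C).toAffine.Equation x y ↔ y ^ 2 = ev x B * RatFunc.X + ev x C := by
  rw [WeierstrassCurve.Affine.equation_iff]
  simp only [surfW, algMap_alph, ev, coe_eval₂RingHom, eval_quad _ x hB, eval_cubic _ x hC hC']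
  constructor <;> intro h <;> linear_combination h

variable (B C) in
abbrev CR : Type := (surfW 0 B C).toAffine.CoordinateRing

variable (B C) in
/-- The constants. -/
def io : RatFunc ℚ →+* CR B C :=
  (CoordinateRing.mk (surfW 0 B C).toAffine).comp (Polynomial.C.comp Polynomial.C)

variable (B C) in
/-- Polynomials in the coordinate `X`. -/
def psi : ℚ[X] →+* CR B C :=
  eval₂RingHom ((io B C).comp RatFunc.C)
    (CoordinateRing.mk (surfW 0 B C).toAffine (Polynomial.C Polynomial.X))

variable (B C) in
/-- Polynomials in the coordinates `X` and `Y`. -/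
def phi : ℚ[X][X] →+* CR B C :=
  eval₂RingHom (psi B C) (CoordinateRing.mk (surfW 0 B C).toAffine Polynomial.X)

lemma Y_sq_gen {F : Type*} [Field F] (W : WeierstrassCurve.Affine F) (h1 : W.a₁ = 0)
    (h3 : W.a₃ = 0) : (CoordinateRing.mk W Polynomial.X) ^ 2 =
    CoordinateRing.mk W (Polynomial.C Polynomial.X) ^ 3 +
    CoordinateRing.mk W (Polynomial.C (Polynomial.C W.a₂)) *
      CoordinateRing.mk W (Polynomial.C Polynomial.X) ^ 2 +
    CoordinateRing.mk W (Polynomial.C (Polynomial.C W.a₄)) *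
      CoordinateRing.mk W (Polynomial.C Polynomial.X) +
    CoordinateRing.mk W (Polynomial.C (Polynomial.C W.a₆)) := by
  rw [← sub_eq_zero]
  simp only [← map_pow, ← map_mul, ← map_add, ← map_sub]
  refine AdjoinRoot.mk_eq_zero.mpr ⟨1, ?_⟩
  simp [WeierstrassCurve.Affine.polynomial, h1, h3]

lemma Y_sq (hB : B.natDegree ≤ 2) (hC : C.Monic) (hC' : C.natDegree = 3) : (CoordinateRing.mk (surfW 0 B C).toAffine Polynomial.X) ^ 2 =
    psi B C B * io B C RatFunc.X + psi B C C := by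
  rw [Y_sq_gen _ rfl rfl]
  have h2 : (surfW 0 B C).toAffine.a₂ = RatFunc.C (B.coeff 2) * RatFunc.X + RatFunc.C (C.coeff 2) :=
    algMap_alph B C 2
  have h4 : (surfW 0 B C).toAffine.a₄ = RatFunc.C (B.coeff 1) * RatFunc.X + RatFunc.C (C.coeff 1) :=
    algMap_alph B C 1
  have h6 : (surfW 0 B C).toAffine.a₆ = RatFunc.C (B.coeff 0) * RatFunc.X + RatFunc.C (C.coeff 0) :=
    algMap_alph B C 0
  rw [h2, h4, h6]
  have hi : ∀ c, CoordinateRing.mk (surfW 0 B C).toAffine (Polynomial.C (Polynomial.C c)) =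
    io B C c := fun c => rfl
  simp only [hi, map_add, map_mul]
  simp only [psi, coe_eval₂RingHom, eval_quad _ _ hB, eval_cubic _ _ hC hC', RingHom.comp_apply]
  ring

lemma polyT (hB : B.natDegree ≤ 2) (hC : C.Monic) (hC' : C.natDegree = 3) (p : ℚ[X]) : ∃ (k : ℕ) (h : ℚ[X][X]),
    psi B C B ^ k * io B C (algebraMap ℚ[X] (RatFunc ℚ) p) = phi B C h := by
  have hYs : phi B C Polynomial.X ^ 2 = psi B C B * io B C RatFunc.X + psi B C C := by
    rw [← Y_sq hB hC hC']; simp [phi]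
  have hps : ∀ q : ℚ[X], phi B C (Polynomial.C q) = psi B C q := fun q => by simp [phi]
  induction p using Polynomial.induction_on with
  | C a =>
    refine ⟨0, Polynomial.C (Polynomial.C a), ?_⟩
    simp [hps, psi, RatFunc.algebraMap_C]
  | add p q hp hq =>
    obtain ⟨k1, h1, e1⟩ := hp
    obtain ⟨k2, h2, e2⟩ := hq
    refine ⟨k1 + k2, Polynomial.C (B ^ k2) * h1 + Polynomial.C (B ^ k1) * h2, ?_⟩
    simp only [map_add, map_mul, hps, map_pow, ← e1, ← e2]
    ring
  | monomial n a hp =>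
    obtain ⟨k, h, e⟩ := hp
    refine ⟨k + 1, h * (Polynomial.X ^ 2 - Polynomial.C C), ?_⟩
    rw [map_mul (phi B C), map_sub, map_pow, hps, hYs, ← e]
    simp only [map_mul, map_pow, pow_succ, RatFunc.algebraMap_X]
    ring

variable (B C) in
def Clr (r : CR B C) : Prop := ∃ (p : ℚ[X]) (k : ℕ) (h : ℚ[X][X]), p ≠ 0 ∧
  psi B C B ^ k * io B C (algebraMap ℚ[X] (RatFunc ℚ) p) * r = phi B C h

lemma clr_mul {r s : CR B C} (hr : Clr B C r) (hs : Clr B C s) : Clr B C (r * s) := by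
  obtain ⟨p1, k1, h1, n1, e1⟩ := hr
  obtain ⟨p2, k2, h2, n2, e2⟩ := hs
  refine ⟨p1 * p2, k1 + k2, h1 * h2, mul_ne_zero n1 n2, ?_⟩
  simp only [map_mul, ← e1, ← e2]; ring

lemma clr_add (hB : B.natDegree ≤ 2) (hC : C.Monic) (hC' : C.natDegree = 3)
    {r s : CR B C} (hr : Clr B C r) (hs : Clr B C s) : Clr B C (r + s) := by
  obtain ⟨p1, k1, h1, n1, e1⟩ := hr
  obtain ⟨p2, k2, h2, n2, e2⟩ := hs
  obtain ⟨m1, g1, f1⟩ := polyT hB hC hC' p1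
  obtain ⟨m2, g2, f2⟩ := polyT hB hC hC' p2
  have hps : ∀ q : ℚ[X], phi B C (Polynomial.C q) = psi B C q := fun q => by simp [phi]
  refine ⟨p1 * p2, k1 + k2 + m1 + m2, Polynomial.C (B ^ (k2 + m1)) * h1 * g2 +
    Polynomial.C (B ^ (k1 + m2)) * h2 * g1, mul_ne_zero n1 n2, ?_⟩
  simp only [map_mul, map_add, map_pow, hps, ← e1, ← e2, ← f1, ← f2]; ring

lemma clr_all (hB : B.natDegree ≤ 2) (hC : C.Monic) (hC' : C.natDegree = 3) (r : CR B C) : Clr B C r := by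
  have hX : Clr B C (CoordinateRing.mk (surfW 0 B C).toAffine (Polynomial.C Polynomial.X)) :=
    ⟨1, 0, Polynomial.C Polynomial.X, one_ne_zero, by simp [phi, psi]⟩
  have hY : Clr B C (CoordinateRing.mk (surfW 0 B C).toAffine Polynomial.X) :=
    ⟨1, 0, Polynomial.X, one_ne_zero, by simp [phi]⟩
  have h1 : Clr B C 1 := ⟨1, 0, 1, one_ne_zero, by simp⟩
  have hpow : ∀ (s : CR B C) (n : ℕ), Clr B C s → Clr B C (s ^ n) := by
    intro s n hs
    induction n with
    | zero => simpa using h1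
    | succ n ih => rw [pow_succ]; exact clr_mul ih hs
  have hK : ∀ c : RatFunc ℚ, Clr B C (io B C c) := by
    intro c
    obtain ⟨k, h, e⟩ := polyT hB hC hC' c.num
    refine ⟨c.denom, k, h, c.denom_ne_zero, ?_⟩
    rw [← e, mul_assoc, ← map_mul]
    congr 2
    have := RatFunc.num_div_denom c
    rw [div_eq_iff (RatFunc.algebraMap_ne_zero c.denom_ne_zero)] at this
    rw [this, mul_comm]
  have hKX : ∀ q : (RatFunc ℚ)[X],
      Clr B C (CoordinateRing.mk (surfW 0 B C).toAffine (Polynomial.C q)) := by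
    intro q
    induction q using Polynomial.induction_on' with
    | add p q hp hq => rw [map_add, map_add]; exact clr_add hB hC hC' hp hq
    | monomial n a =>
      rw [← C_mul_X_pow_eq_monomial, map_mul, map_mul, map_pow, map_pow]
      exact clr_mul (hK a) (hpow _ _ hX)
  obtain ⟨f, rfl⟩ := AdjoinRoot.mk_surjective r
  induction f using Polynomial.induction_on' with
  | add p q hp hq => rw [map_add]; exact clr_add hB hC hC' hp hq
  | monomial n a =>
    rw [← C_mul_X_pow_eq_monomial, map_mul, map_pow]
    exact clr_mul (hKX a) (hpow _ _ hY)

/-- Evaluation at a point. -/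
def evP {x y : RatFunc ℚ} (h : (surfW 0 B C).toAffine.Equation x y) : CR B C →+* RatFunc ℚ :=
  AdjoinRoot.lift (evalRingHom x) y (by
    rw [eval₂_evalRingHom]; exact h)

lemma evP_phi {x y : RatFunc ℚ} (h : (surfW 0 B C).toAffine.Equation x y) (g : ℚ[X][X]) :
    evP h (phi B C g) = eval₂ (ev x) y g := by
  have : (evP h).comp (phi B C) = eval₂RingHom (ev x) y := by
    ext
    · simp [phi, psi, evP, io, ev]
    · simp [phi, psi, evP, io, ev]
    · simp [phi, psi, evP, io, ev]
  exact congrArg (fun f : ℚ[X][X] →+* RatFunc ℚ => f g) this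

lemma not_sq (b c : ℚ) (hb : b ≠ 0) (y : RatFunc ℚ) :
    y ^ 2 ≠ RatFunc.C b * RatFunc.X + RatFunc.C c := by
  intro h
  have e : RatFunc.C b * RatFunc.X + RatFunc.C c =
      algebraMap ℚ[X] (RatFunc ℚ) (Polynomial.C b * Polynomial.X + Polynomial.C c) := by
    simp [RatFunc.algebraMap_C, RatFunc.algebraMap_X]
  have hd := congrArg RatFunc.intDegree h
  rw [e, RatFunc.intDegree_polynomial, natDegree_linear hb] at hd
  have hy : y ≠ 0 := by
    rintro rfl
    simp at hd
  rw [sq, RatFunc.intDegree_mul hy hy] at hd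
  push_cast at hd
  omega

lemma evP_X {x y : RatFunc ℚ} (h : (surfW 0 B C).toAffine.Equation x y) :
    evP h (CoordinateRing.XClass (surfW 0 B C).toAffine x) = 0 := by
  simp [evP, CoordinateRing.XClass]

lemma evP_Y {x y : RatFunc ℚ} (h : (surfW 0 B C).toAffine.Equation x y) :
    evP h (CoordinateRing.YClass (surfW 0 B C).toAffine (Polynomial.C y)) = 0 := by
  simp [evP, CoordinateRing.YClass]

lemma ker_evP {x y : RatFunc ℚ} (h : (surfW 0 B C).toAffine.Nonsingular x y) :
    RingHom.ker (evP h.1) = idl (Point.some x y h) := by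
  symm
  have hle : idl (Point.some x y h) ≤ RingHom.ker (evP h.1) := by
    refine Ideal.span_le.mpr ?_
    rintro z (rfl | rfl)
    · exact evP_X h.1
    · exact evP_Y h.1
  rcases idl_max (Point.some x y h) with h1 | h1
  · rw [h1, top_le_iff] at hle
    exact absurd hle (RingHom.ker_ne_top _)
  · exact h1.eq_of_le (RingHom.ker_ne_top _) hle

theorem spans (hB : B.natDegree ≤ 2) (hC : C.Monic) (hC' : C.natDegree = 3) (H : AddSubgroup (surfW 0 B C).toAffine.Point)
    (hl : ∃ l0 : List (surfW 0 B C).toAffine.Point, (∀ P ∈ l0, P ∈ H) ∧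
      (l0.map idl).prod = Ideal.span {psi B C B})
    (hz : ∀ x y h, ev x B = 0 → Point.some x y h ∈ H) (P : (surfW 0 B C).toAffine.Point) :
    P ∈ H := by
  rcases P with _ | ⟨x, y, hns⟩
  · exact H.zero_mem
  by_cases hx0 : ev x B = 0
  · exact hz x y hns hx0
  have hxc : ¬ ∃ c, x = RatFunc.C c := by
    rintro ⟨c, rfl⟩
    have h1 := (surf_eqn hB hC hC' _ _).mp hns.1
    have h2 : ∀ q : ℚ[X], ev (RatFunc.C c) q = RatFunc.C (q.eval c) := by
      intro q
      simp only [ev, coe_eval₂RingHom, eval₂_at_apply]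
    rw [h2, h2] at h1
    refine not_sq _ _ ?_ _ h1
    intro h3
    exact hx0 (by rw [h2, h3, map_zero])
  obtain ⟨g, hg0, hg⟩ := x_alg x y hxc
  set γ := phi B C g with hγ
  have hclear : ∀ r : CR B C, evP hns.1 r = 0 → ∃ k : ℕ, γ ∣ psi B C B ^ k * r := by
    intro r hr
    obtain ⟨p, k, h, hp, e⟩ := clr_all hB hC hC' r
    have h1 := congrArg (evP hns.1) e
    rw [map_mul, hr, mul_zero, evP_phi] at h1
    obtain ⟨h', rfl⟩ := hg h h1.symm
    rw [map_mul] at e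
    refine ⟨k, io B C (algebraMap ℚ[X] (RatFunc ℚ) p)⁻¹ * phi B C h', ?_⟩
    have hu : io B C (algebraMap ℚ[X] (RatFunc ℚ) p) * io B C (algebraMap ℚ[X] (RatFunc ℚ) p)⁻¹ = 1 := by
      rw [← map_mul, mul_inv_cancel₀ (RatFunc.algebraMap_ne_zero hp), map_one]
    linear_combination io B C (algebraMap ℚ[X] (RatFunc ℚ) p)⁻¹ * e - psi B C B ^ k * r * hu
  have hpsi0 : psi B C B ≠ 0 := by
    intro h0
    apply hx0
    have h1 := evP_phi hns.1 (Polynomial.C B)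
    rw [eval₂_C] at h1
    rw [← h1]
    simp [phi, h0]
  obtain ⟨k1, hk1⟩ := hclear _ (evP_X hns.1)
  obtain ⟨k2, hk2⟩ := hclear _ (evP_Y hns.1)
  have hγ0 : γ ≠ 0 := by
    intro h0
    rw [h0, zero_dvd_iff] at hk1
    exact mul_ne_zero (pow_ne_zero _ hpsi0) (CoordinateRing.XClass_ne_zero x) hk1
  have hγm : Ideal.span {γ} ≤ idl (Point.some x y hns) := by
    rw [Ideal.span_singleton_le_iff_mem, ← ker_evP hns]
    change evP hns.1 (phi B C g) = 0
    rw [evP_phi]; exact hg0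
  obtain ⟨J, hJ⟩ := idl_dvd _ hγm
  have hBk : Ideal.span {psi B C B ^ (k1 + k2)} ≤ J := by
    apply idl_cancel (Point.some x y hns)
    rw [← hJ, mul_comm, Ideal.span_singleton_mul_le_iff]
    intro z hz
    change z ∈ CoordinateRing.XYIdeal (surfW 0 B C).toAffine x (Polynomial.C y) at hz
    rw [CoordinateRing.XYIdeal, Ideal.mem_span_pair] at hz
    obtain ⟨a, b, rfl⟩ := hz
    rw [Ideal.mem_span_singleton]
    obtain ⟨u, hu⟩ := hk1
    obtain ⟨v, hv⟩ := hk2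
    refine ⟨psi B C B ^ k2 * a * u + psi B C B ^ k1 * b * v, ?_⟩
    rw [pow_add]
    linear_combination psi B C B ^ k2 * a * hu + psi B C B ^ k1 * b * hv
  obtain ⟨l0, hl0, hp0⟩ := hl
  have hpow : ∀ n : ℕ, ∃ l : List (surfW 0 B C).toAffine.Point, (∀ P ∈ l, P ∈ H) ∧
      (l.map idl).prod = Ideal.span {psi B C B ^ n} := by
    intro n
    induction n with
    | zero => exact ⟨[], by simp, by simp⟩
    | succ n ih =>
      obtain ⟨l, h1, h2⟩ := ih
      refine ⟨l ++ l0, ?_, ?_⟩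
      · intro Q hQ
        rcases List.mem_append.mp hQ with h | h
        · exact h1 _ h
        · exact hl0 _ h
      · rw [List.map_append, List.prod_append, h2, hp0, Ideal.span_singleton_mul_span_singleton,
          pow_succ]
  obtain ⟨l, h1, h2⟩ := hpow (k1 + k2)
  obtain ⟨l', h3, h4⟩ := idl_prod H _ l J rfl h1 (h2.trans_le hBk)
  have h5 := sum_eq_zero (Point.some x y hns :: l') hγ0 (by
    rw [List.map_cons, List.prod_cons, ← h4, ← hJ])
  rw [List.sum_cons] at h5
  rw [eq_neg_of_add_eq_zero_left h5]
  exact H.neg_mem (list_sum_mem h3)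

end surf

/-- rank from an integral basis -/
lemma rank_of_basis (W : WeierstrassCurve (RatFunc ℚ)) (n : ℕ) (v : Fin n → W.toAffine.Point)
    (hv : LinearIndependent ℤ v) (hs : ∀ P, P ∈ AddSubgroup.closure (Set.range v)) :
    rankW W = n := by
  have b := Module.Basis.mk hv (by
    intro P _
    have := hs P
    rwa [← Submodule.span_int_eq_addSubgroupClosure] at this)
  have := Module.Free.of_basis b
  rw [rankW, Module.finrank_baseChange, Module.finrank_eq_card_basis b, Fintype.card_fin]

/-- Independence by 2-descent. -/
lemma indep_one {A : Type*} [AddCommGroup A] (h2 : ∀ a : A, a + a = 0 → a = 0) (P : A)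
    (hP : ∀ a, a + a ≠ P) (n : ℤ) (h : n • P = 0) : n = 0 := by
  by_contra hn
  induction hk : n.natAbs using Nat.strong_induction_on generalizing n with
  | _ k ih =>
    rcases Int.even_or_odd' n with ⟨m, rfl | rfl⟩
    · refine ih m.natAbs (by omega) m (h2 _ ?_) (by omega) rfl
      rw [← h]; module
    · refine hP (-m • P) ?_
      rw [← sub_eq_zero, ← neg_eq_zero, ← h]; module

lemma indep_two {A : Type*} [AddCommGroup A] (h2 : ∀ a : A, a + a = 0 → a = 0) (P Q : A)
    (hP : ∀ a, a + a ≠ P) (hQ : ∀ a, a + a ≠ Q) (hPQ : ∀ a, a + a ≠ P + Q) (n m : ℤ)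
    (h : n • P + m • Q = 0) : n = 0 ∧ m = 0 := by
  by_contra hn
  induction hk : n.natAbs + m.natAbs using Nat.strong_induction_on generalizing n m with
  | _ k ih =>
    rcases Int.even_or_odd' n with ⟨a, rfl | rfl⟩ <;> rcases Int.even_or_odd' m with ⟨b, rfl | rfl⟩
    · refine ih (a.natAbs + b.natAbs) (by omega) a b (h2 _ ?_) (by omega) rfl
      rw [← h]; module
    · refine hQ (-a • P - b • Q) ?_
      rw [← sub_eq_zero, ← neg_eq_zero, ← h]; module
    · refine hP (-a • P - b • Q) ?_
      rw [← sub_eq_zero, ← neg_eq_zero, ← h]; module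
    · refine hPQ (-a • P - b • Q) ?_
      rw [← sub_eq_zero, ← neg_eq_zero, ← h]; module

section descent

lemma double_zero {F : Type*} [Field F] (h20 : (2 : F) ≠ 0) (W : WeierstrassCurve.Affine F)
    (h1 : W.a₁ = 0) (h3 : W.a₃ = 0)
    (hno : ∀ x : F, x ^ 3 + W.a₂ * x ^ 2 + W.a₄ * x + W.a₆ ≠ 0) (R : W.Point) (hR : R + R = 0) :
    R = 0 := by
  rcases R with _ | ⟨x, y, h⟩
  · rfl
  · exfalso
    by_cases hy : y = W.negY x y
    · have he := (WeierstrassCurve.Affine.equation_iff ..).mp h.1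
      simp only [WeierstrassCurve.Affine.negY, h1, h3] at hy he
      have hy0 : y = 0 := by
        have : 2 * y = 0 := by linear_combination hy
        exact (mul_eq_zero.mp this).resolve_left h20
      apply hno x
      rw [hy0] at he
      linear_combination -he
    · rw [Point.add_self_of_Y_ne hy] at hR
      exact Point.some_ne_zero _ hR

lemma double_some {F : Type*} [Field F] (h20 : (2 : F) ≠ 0) (W : WeierstrassCurve.Affine F)
    (h1 : W.a₁ = 0) (h3 : W.a₃ = 0) (x0 y0 : F) (h0 : W.Nonsingular x0 y0)
    (hno : ∀ x : F, x ^ 4 - 2 * W.a₄ * x ^ 2 - 8 * W.a₆ * x + W.a₄ ^ 2 - 4 * W.a₂ * W.a₆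
      - 4 * x0 * (x ^ 3 + W.a₂ * x ^ 2 + W.a₄ * x + W.a₆) ≠ 0) (R : W.Point) :
    R + R ≠ Point.some x0 y0 h0 := by
  intro hR
  rcases R with _ | ⟨x, y, h⟩
  · change (0 : W.Point) + 0 = _ at hR
    rw [add_zero] at hR
    exact Point.some_ne_zero _ hR.symm
  · by_cases hy : y = W.negY x y
    · rw [Point.add_self_of_Y_eq hy] at hR
      exact Point.some_ne_zero _ hR.symm
    · rw [Point.add_self_of_Y_ne hy] at hR
      rw [Point.some.injEq] at hR
      have hX := hR.1
      rw [WeierstrassCurve.Affine.slope_of_Y_ne rfl hy] at hX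
      have he := (WeierstrassCurve.Affine.equation_iff ..).mp h.1
      simp only [WeierstrassCurve.Affine.addX, WeierstrassCurve.Affine.negY, h1, h3] at hX he hy
      have hy0 : y ≠ 0 := by
        rintro rfl
        simp at hy
      apply hno x
      have hs : y - (-y - 0 * x - 0) = 2 * y := by ring
      rw [hs] at hX
      have h2y : 2 * y ≠ 0 := mul_ne_zero h20 hy0
      field_simp at hX
      linear_combination hX + (8 * x + 4 * W.a₂ + 4 * x0) * he

/-- `ℤ[T] → ℚ(T)` -/
def rho : ℤ[X] →+* RatFunc ℚ :=
  (algebraMap ℚ[X] (RatFunc ℚ)).comp (mapRingHom (Int.castRingHom ℚ))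

lemma root_spec (f : ℤ[X][X]) (hf : f.Monic) (x : RatFunc ℚ) (hx : eval₂ rho x f = 0) (t : ℤ) :
    ∃ n : ℤ, eval n (f.map (evalRingHom t)) = 0 := by
  have h1 : aeval x (f.map (mapRingHom (Int.castRingHom ℚ))) = 0 := by
    rw [aeval_def, eval₂_map]; exact hx
  obtain ⟨p, rfl⟩ := isInteger_of_is_root_of_monic (hf.map _) h1
  rw [aeval_algebraMap_apply, map_eq_zero_iff _ (RatFunc.algebraMap_injective ℚ)] at h1
  rw [aeval_def, eval₂_map] at h1
  have h2 := congrArg (evalRingHom (t : ℚ)) h1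
  rw [map_zero, hom_eval₂] at h2
  have h3 : aeval (evalRingHom (t : ℚ) p) (f.map (evalRingHom t)) = 0 := by
    rw [aeval_def, eval₂_map]
    rw [← h2]
    congr 1
    ext <;> simp
  obtain ⟨n, hn⟩ := isInteger_of_is_root_of_monic (hf.map _) h3
  rw [← hn, aeval_algebraMap_apply, map_eq_zero_iff _ (algebraMap ℤ ℚ).injective_int] at h3
  exact ⟨n, by simpa using h3⟩

lemma no_root3 (a b c : ℤ[X]) (t : ℤ) (N : ℕ)
    (h : ∀ n : ZMod N, n ^ 3 + (a.eval t : ℤ) * n ^ 2 + (b.eval t : ℤ) * n + (c.eval t : ℤ) ≠ 0)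
    (x : RatFunc ℚ) : x ^ 3 + rho a * x ^ 2 + rho b * x + rho c ≠ 0 := by
  intro hx
  obtain ⟨n, hn⟩ := root_spec (X ^ 3 + Polynomial.C a * X ^ 2 + Polynomial.C b * X + Polynomial.C c)
    (by monicity!) x (by simpa using hx) t
  apply h n
  have := congrArg (Int.cast : ℤ → ZMod N) hn
  simpa using this

lemma no_root4 (d a b c : ℤ[X]) (t : ℤ) (N : ℕ)
    (h : ∀ n : ZMod N, n ^ 4 + (d.eval t : ℤ) * n ^ 3 + (a.eval t : ℤ) * n ^ 2 + (b.eval t : ℤ) * n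
      + (c.eval t : ℤ) ≠ 0)
    (x : RatFunc ℚ) : x ^ 4 + rho d * x ^ 3 + rho a * x ^ 2 + rho b * x + rho c ≠ 0 := by
  intro hx
  obtain ⟨n, hn⟩ := root_spec (X ^ 4 + Polynomial.C d * X ^ 3 + Polynomial.C a * X ^ 2 +
    Polynomial.C b * X + Polynomial.C c) (by monicity!) x (by simpa using hx) t
  apply h n
  have := congrArg (Int.cast : ℤ → ZMod N) hn
  simpa using this

end descent

lemma delta_ne (B C : ℚ[X]) (t a b c : ℚ) (ha : (alph 0 B C 2).eval t = a)
    (hb : (alph 0 B C 1).eval t = b) (hc : (alph 0 B C 0).eval t = c)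
    (h : a ^ 2 * b ^ 2 - 4 * b ^ 3 - 4 * a ^ 3 * c + 18 * a * b * c - 27 * c ^ 2 ≠ 0) :
    (surfW 0 B C).Δ ≠ 0 := by
  set p := alph 0 B C 2 with hp
  set q := alph 0 B C 1 with hq
  set r := alph 0 B C 0 with hr
  have e : (surfW 0 B C).Δ = algebraMap ℚ[X] (RatFunc ℚ)
      (16 * (p ^ 2 * q ^ 2 - 4 * q ^ 3 - 4 * p ^ 3 * r + 18 * p * q * r - 27 * r ^ 2)) := by
    simp only [WeierstrassCurve.Δ, WeierstrassCurve.b₂, WeierstrassCurve.b₄, WeierstrassCurve.b₆,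
      WeierstrassCurve.b₈, surfW, map_mul, map_sub, map_add, map_pow, map_ofNat, ← hp, ← hq, ← hr]
    ring
  rw [e]
  apply RatFunc.algebraMap_ne_zero
  intro h0
  apply h
  have := congrArg (Polynomial.eval t) h0
  simp only [eval_mul, eval_sub, eval_add, eval_pow, eval_ofNat, ha, hb, hc, eval_zero] at this
  linear_combination this / 16

lemma idl_pt {B C : ℚ[X]} (c : ℚ) (x y : RatFunc ℚ) (hx : x = RatFunc.C c)
    (h : (surfW 0 B C).toAffine.Nonsingular x y) :
    idl (-Point.some x y h) * idl (Point.some x y h) =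
      Ideal.span {psi B C (Polynomial.X - Polynomial.C c)} := by
  subst hx
  rw [Point.neg_some]
  refine (CoordinateRing.XYIdeal_neg_mul h).trans ?_
  rw [CoordinateRing.XIdeal, CoordinateRing.XClass]
  simp [psi, io]


lemma two_ne : (2 : RatFunc ℚ) ≠ 0 := two_ne_zero

lemma rank_zero_case : rankW (surfW 0 1 (X ^ 3)) = 0 := by
  have hB : (1 : ℚ[X]).natDegree ≤ 2 := by simp
  have hC : (X ^ 3 : ℚ[X]).Monic := by monicity!
  have hC' : (X ^ 3 : ℚ[X]).natDegree = 3 := by simp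
  refine rank_of_basis _ 0 Fin.elim0 linearIndependent_empty_type ?_
  intro P
  refine spans hB hC hC' _ ⟨[], by simp, by simp⟩ ?_ P
  intro x y h h0
  simp at h0

lemma mem_of_X (B C : ℚ[X]) (x0 y0 x y : RatFunc ℚ) (h0 : (surfW 0 B C).toAffine.Nonsingular x0 y0)
    (h : (surfW 0 B C).toAffine.Nonsingular x y) (H : AddSubgroup (surfW 0 B C).toAffine.Point)
    (hx : x = x0) (hH : Point.some x0 y0 h0 ∈ H) : Point.some x y h ∈ H := by
  rcases (Point.X_eq_iff (h₁ := h) (h₂ := h0)).mp hx with e | e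
  · rw [e]; exact hH
  · rw [e]; exact H.neg_mem hH

lemma del_one : (surfW 0 X (X ^ 3 + 1)).Δ ≠ 0 := by
  apply delta_ne _ _ 0 0 0 1 <;> simp [alph, coeff_X, coeff_one]

lemma del_two : (surfW 0 (X ^ 2 - X) (X ^ 3 - X + 1)).Δ ≠ 0 := by
  apply delta_ne _ _ 0 0 (-1) 1 <;> simp [alph, coeff_X, coeff_one]
  norm_num

lemma rho_X : rho X = RatFunc.X := by simp [rho, RatFunc.algebraMap_X]

lemma rank_one_case : rankW (surfW 0 X (X ^ 3 + 1)) = 1 := by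
  have hB : (X : ℚ[X]).natDegree ≤ 2 := by simp
  have hC : (X ^ 3 + 1 : ℚ[X]).Monic := by monicity!
  have hC' : (X ^ 3 + 1 : ℚ[X]).natDegree = 3 := by compute_degree!
  set W := surfW 0 X (X ^ 3 + 1) with hW
  have a2 : W.toAffine.a₂ = 0 := by
    refine (algMap_alph _ _ 2).trans ?_
    simp [coeff_X, coeff_one]
  have a4 : W.toAffine.a₄ = RatFunc.X := by
    refine (algMap_alph _ _ 1).trans ?_
    simp [coeff_X, coeff_one]
  have a6 : W.toAffine.a₆ = 1 := by
    refine (algMap_alph _ _ 0).trans ?_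
    simp [coeff_X, coeff_one]
  have hP : W.toAffine.Nonsingular 0 1 := by
    refine (WeierstrassCurve.Affine.equation_iff_nonsingular_of_Δ_ne_zero del_one).mp ?_
    rw [surf_eqn hB hC hC']; simp
  refine rank_of_basis W 1 ![Point.some 0 1 hP] ?_ ?_
  · rw [Fintype.linearIndependent_iff]
    intro g hg i
    rw [Fin.sum_univ_one] at hg
    rw [Subsingleton.elim i 0]
    refine indep_one ?_ (Point.some 0 1 hP) ?_ _ hg
    · refine double_zero two_ne _ rfl rfl ?_
      intro x
      rw [a2, a4, a6]
      have := no_root3 0 X 1 1 2 (by simp only [eval_zero, eval_X, eval_one]; decide) x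
      simpa [rho_X] using this
    · refine double_some two_ne _ rfl rfl 0 1 hP ?_
      intro x
      rw [a2, a4, a6]
      have := no_root4 0 (-2 * X) (-8) (X ^ 2) 1 3 (by
        simp only [eval_zero, eval_X, eval_one, eval_mul, eval_neg, eval_ofNat, eval_pow]; decide) x
      intro h
      apply this
      rw [← h]
      simp only [map_zero, map_mul, map_neg, map_ofNat, map_pow, rho_X]
      ring
  · have hm : Point.some 0 1 hP ∈ AddSubgroup.closure (Set.range ![Point.some 0 1 hP]) :=
      AddSubgroup.subset_closure ⟨0, rfl⟩
    refine spans hB hC hC' _ ⟨[-Point.some 0 1 hP, Point.some 0 1 hP], ?_, ?_⟩ ?_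
    · simp only [List.mem_cons, List.not_mem_nil, or_false]
      rintro P (rfl | rfl)
      · exact neg_mem hm
      · exact hm
    · have := idl_pt 0 0 1 (by simp) hP
      simp only [List.map_cons, List.map_nil, List.prod_cons, List.prod_nil, mul_one]
      rw [this]; simp
    · intro x y h h0
      refine mem_of_X _ _ 0 1 x y hP h _ ?_ hm
      simpa using h0

lemma rank_two_case : rankW (surfW 0 (X ^ 2 - X) (X ^ 3 - X + 1)) = 2 := by
  have hB : (X ^ 2 - X : ℚ[X]).natDegree ≤ 2 := by compute_degree!
  have hC : (X ^ 3 - X + 1 : ℚ[X]).Monic := by monicity!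
  have hC' : (X ^ 3 - X + 1 : ℚ[X]).natDegree = 3 := by compute_degree!
  set W := surfW 0 (X ^ 2 - X) (X ^ 3 - X + 1) with hW
  have a2 : W.toAffine.a₂ = RatFunc.X := by
    refine (algMap_alph _ _ 2).trans ?_
    simp [coeff_X, coeff_one]
  have a4 : W.toAffine.a₄ = -(RatFunc.X + 1) := by
    refine (algMap_alph _ _ 1).trans ?_
    simp [coeff_X, coeff_one]
    ring
  have a6 : W.toAffine.a₆ = 1 := by
    refine (algMap_alph _ _ 0).trans ?_
    simp [coeff_X, coeff_one]
  have hns : ∀ x y, W.toAffine.Equation x y → W.toAffine.Nonsingular x y := fun x y h =>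
    (WeierstrassCurve.Affine.equation_iff_nonsingular_of_Δ_ne_zero del_two).mp h
  have hP : W.toAffine.Nonsingular 0 1 := by
    apply hns
    rw [surf_eqn hB hC hC']; simp
  have hQ : W.toAffine.Nonsingular 1 1 := by
    apply hns
    rw [surf_eqn hB hC hC']; simp
  have hS : W.toAffine.Nonsingular (-(RatFunc.X + 1)) (-1) := by
    apply hns
    rw [surf_eqn hB hC hC']; simp; ring
  have hadd : Point.some 0 1 hP + Point.some 1 1 hQ = Point.some _ _ hS := by
    rw [Point.add_of_X_ne zero_ne_one, Point.some.injEq]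
    have hs : W.toAffine.slope 0 1 1 1 = 0 := by
      rw [WeierstrassCurve.Affine.slope_of_X_ne zero_ne_one]; simp
    have h1 : W.toAffine.a₁ = 0 := rfl
    have h3 : W.toAffine.a₃ = 0 := rfl
    rw [hs]
    simp only [WeierstrassCurve.Affine.addX, WeierstrassCurve.Affine.addY,
      WeierstrassCurve.Affine.negAddY, WeierstrassCurve.Affine.negY, a2, h1, h3]
    constructor <;> ring
  refine rank_of_basis W 2 ![Point.some 0 1 hP, Point.some 1 1 hQ] ?_ ?_
  · rw [LinearIndependent.pair_iff]
    intro s t hst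
    refine indep_two ?_ (Point.some 0 1 hP) (Point.some 1 1 hQ) ?_ ?_ ?_ _ _ hst
    · refine double_zero two_ne _ rfl rfl ?_
      intro x
      rw [a2, a4, a6]
      have := no_root3 X (-(X + 1)) 1 0 2
        (by simp only [eval_zero, eval_X, eval_one, eval_neg, eval_add]; decide) x
      simpa [rho_X] using this
    · refine double_some two_ne _ rfl rfl 0 1 hP ?_
      intro x
      rw [a2, a4, a6]
      have := no_root4 0 (2 * (X + 1)) (-8) ((X - 1) ^ 2) 0 5 (by
        simp only [eval_zero, eval_X, eval_one, eval_mul, eval_neg, eval_ofNat, eval_pow, eval_sub,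
          eval_add]; decide) x
      intro h
      apply this
      rw [← h]
      simp only [map_zero, map_one, map_add, map_sub, map_mul, map_neg, map_ofNat, map_pow, rho_X]
      ring
    · refine double_some two_ne _ rfl rfl 1 1 hQ ?_
      intro x
      rw [a2, a4, a6]
      have := no_root4 (-4) (2 * (X + 1) - 4 * X) (-8 + 4 * (X + 1)) ((X - 1) ^ 2 - 4) 0 5 (by
        simp only [eval_zero, eval_X, eval_one, eval_mul, eval_neg, eval_ofNat, eval_pow, eval_sub,
          eval_add]; decide) x
      intro h
      apply this
      rw [← h]
      simp only [map_zero, map_one, map_add, map_sub, map_mul, map_neg, map_ofNat, map_pow, rho_X]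
      ring
    · rw [hadd]
      refine double_some two_ne _ rfl rfl _ _ hS ?_
      intro x
      rw [a2, a4, a6]
      have := no_root4 (4 * (X + 1)) (2 * (X + 1) + 4 * (X + 1) * X) (-8 - 4 * (X + 1) ^ 2)
        ((X - 1) ^ 2 + 4 * (X + 1)) 1 3 (by
        simp only [eval_zero, eval_X, eval_one, eval_mul, eval_neg, eval_ofNat, eval_pow, eval_sub,
          eval_add]; decide) x
      intro h
      apply this
      rw [← h]
      simp only [map_zero, map_one, map_add, map_sub, map_mul, map_neg, map_ofNat, map_pow, rho_X]
      ring
  · have hm : Point.some 0 1 hP ∈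
        AddSubgroup.closure (Set.range ![Point.some 0 1 hP, Point.some 1 1 hQ]) :=
      AddSubgroup.subset_closure ⟨0, rfl⟩
    have hm' : Point.some 1 1 hQ ∈
        AddSubgroup.closure (Set.range ![Point.some 0 1 hP, Point.some 1 1 hQ]) :=
      AddSubgroup.subset_closure ⟨1, rfl⟩
    refine spans hB hC hC' _ ⟨[-Point.some 0 1 hP, Point.some 0 1 hP, -Point.some 1 1 hQ,
      Point.some 1 1 hQ], ?_, ?_⟩ ?_
    · simp only [List.mem_cons, List.not_mem_nil, or_false]
      rintro P (rfl | rfl | rfl | rfl)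
      · exact neg_mem hm
      · exact hm
      · exact neg_mem hm'
      · exact hm'
    · have e1 := idl_pt 0 0 1 (by simp) hP
      have e2 := idl_pt 1 1 1 (by simp) hQ
      simp only [List.map_cons, List.map_nil, List.prod_cons, List.prod_nil, mul_one]
      rw [← mul_assoc, e1, e2, Ideal.span_singleton_mul_span_singleton, ← map_mul]
      congr 3
      simp only [map_zero, map_one]
      ring
    · intro x y h h0
      have h0' : x * (x - 1) = 0 := by
        rw [← h0]; simp; ring
      rcases mul_eq_zero.mp h0' with h0' | h0'
      · exact mem_of_X _ _ 0 1 x y hP h _ h0' hm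
      · exact mem_of_X _ _ 1 1 x y hQ h _ (sub_eq_zero.mp h0') hm'

end RankAux

/-- For each `m ∈ {0,1,2}` there are `B, C ∈ ℚ[X]` with `B ≠ 0`, `deg B ≤ 2`, `C` monic of
degree 3, such that the Weierstrass curve `Y² = B(X)T + C(X)` over `ℚ(T)` has nonzero
discriminant and rank exactly `m`. -/
theorem stmt_13 :
    ∀ m : ℕ, m ≤ 2 → ∃ B C : ℚ[X], B ≠ 0 ∧ B.natDegree ≤ 2 ∧ C.Monic ∧ C.natDegree = 3 ∧
      (surfW 0 B C).Δ ≠ 0 ∧ rankW (surfW 0 B C) = m := by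
  intro m hm
  interval_cases m
  · refine ⟨1, X ^ 3, one_ne_zero, by simp, by monicity!, by simp, ?_, RankAux.rank_zero_case⟩
    apply RankAux.delta_ne _ _ 1 0 0 1 <;> simp [alph, coeff_one]
  · exact ⟨X, X ^ 3 + 1, X_ne_zero, by simp, by monicity!, by compute_degree!, RankAux.del_one,
      RankAux.rank_one_case⟩
  · refine ⟨X ^ 2 - X, X ^ 3 - X + 1, ?_, by compute_degree!, by monicity!, by compute_degree!,
      RankAux.del_two, RankAux.rank_two_case⟩
    intro h
    have := congrArg (fun p : ℚ[X] => p.coeff 2) h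
    simp [coeff_X] at this

end
end

section
/- Let C ∈ ℚ[X] be monic of degree 3 with nonzero discriminant and let 𝒞 be the elliptic curve over ℚ defined by y² = C(x). Assume that 𝒞(ℚ) has rank 0 and trivial torsion, i.e. the only rational point of 𝒞 is the point at infinity. Then for every polynomial B ∈ ℚ[X] with deg B ≤ 2 and every nonzero integer k, the polynomial B² − 4k²C is, up to a nonzero rational constant factor, a power of an irreducible polynomial in ℚ[X]; that is, B² − 4k²C = λ·Fⁿ for some λ ∈ ℚ \ {0}, some irreducible F ∈ ℚ[X] and some integer n ≥ 1. -/
open Polynomial UniqueFactorizationMonoid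
open scoped TensorProduct

noncomputable section
attribute [local instance] Classical.propDecidable

/-- The elliptic curve `y² = C(x)` over `ℚ` attached to a monic cubic `C`. -/
def cubW (C : ℚ[X]) : WeierstrassCurve ℚ where
  a₁ := 0
  a₂ := C.coeff 2
  a₃ := 0
  a₄ := C.coeff 1
  a₆ := C.coeff 0

theorem no_pt (C : ℚ[X]) (hC : C.Monic) (hdegC : C.natDegree = 3)
    (hΔ : (cubW C).Δ ≠ 0)
    (htriv : ∀ P : (cubW C).toAffine.Point, P = 0) (x y : ℚ) : y ^ 2 ≠ C.eval x := by
  intro h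
  have h3 : C.coeff 3 = 1 := by rw [← hdegC]; exact hC
  rw [Polynomial.eval_eq_sum_range, hdegC] at h
  simp only [Finset.sum_range_succ, Finset.sum_range_zero, h3] at h
  have he : (cubW C).toAffine.Equation x y := by
    rw [WeierstrassCurve.Affine.equation_iff]
    simp only [cubW]
    linear_combination h
  have hn := (WeierstrassCurve.Affine.equation_iff_nonsingular_of_Δ_ne_zero hΔ).1 he
  have := htriv (WeierstrassCurve.Affine.Point.some x y hn)
  exact WeierstrassCurve.Affine.Point.some_ne_zero hn this

theorem no_lin (C : ℚ[X]) (hno : ∀ x y : ℚ, y ^ 2 ≠ C.eval x) (u l : ℚ[X])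
    (hu : u.natDegree = 1) (hd : u ∣ l ^ 2 - C) : False := by
  have hu' : u.degree = 1 := by
    exact (Polynomial.degree_eq_iff_natDegree_eq_of_pos (n := 1) (by norm_num)).2 hu
  obtain ⟨x, hx⟩ := Polynomial.exists_root_of_degree_eq_one hu'
  have h := hx.dvd hd
  apply hno x (l.eval x)
  have h' : eval x (l ^ 2 - C) = 0 := h
  rw [eval_sub, eval_pow] at h'
  linarith

theorem no_fac (C : ℚ[X]) (hdegC : C.natDegree = 3)
    (hno : ∀ x y : ℚ, y ^ 2 ≠ C.eval x) (u b : ℚ[X])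
    (hu1 : 1 ≤ u.natDegree) (hu2 : u.natDegree ≤ 2) (hd : u ∣ b ^ 2 - C) : False := by
  have hu0 : u ≠ 0 := by rintro rfl; simp at hu1
  set l := b % u with hl
  have hlt : l.natDegree < u.natDegree := Polynomial.natDegree_mod_lt b (by omega)
  have hd' : u ∣ l ^ 2 - C := by
    have h1 : u ∣ b - l := by
      refine ⟨b / u, ?_⟩
      have := EuclideanDomain.div_add_mod b u
      rw [hl]; linear_combination -this
    have h2 : l ^ 2 - C = (b ^ 2 - C) - (b - l) * (b + l) := by ring
    rw [h2]
    exact dvd_sub hd (h1.mul_right _)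
  have hdeg : (l ^ 2 - C).natDegree = 3 := by
    rw [Polynomial.natDegree_sub_eq_right_of_natDegree_lt, hdegC]
    rw [natDegree_pow, hdegC]; omega
  obtain ⟨r, hr⟩ := hd'
  have hr0 : r ≠ 0 := by
    rintro rfl
    rw [hr] at hdeg; simp at hdeg
  have hs : u.natDegree + r.natDegree = 3 := by
    rw [← natDegree_mul hu0 hr0, ← hr, hdeg]
  by_cases h1 : u.natDegree = 1
  · exact no_lin C hno u l h1 ⟨r, hr⟩
  · exact no_lin C hno r l (by omega) ⟨u, by rw [hr, mul_comm]⟩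

/-- If the elliptic curve `y² = C(x)` (with `C ∈ ℚ[X]` monic cubic of nonzero discriminant)
has rank `0` and trivial torsion, i.e. its only rational point is the point at infinity, then
for every `B ∈ ℚ[X]` with `deg B ≤ 2` and every nonzero integer `k`, the polynomial
`B² - 4k²C` is a nonzero rational constant times a power of an irreducible polynomial. -/
theorem stmt_15 (C : ℚ[X]) (hC : C.Monic) (hdegC : C.natDegree = 3)
    (hΔ : (cubW C).Δ ≠ 0)
    (htriv : ∀ P : (cubW C).toAffine.Point, P = 0) :
    ∀ B : ℚ[X], B.natDegree ≤ 2 → ∀ k : ℤ, k ≠ 0 →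
      ∃ (lam : ℚ) (F : ℚ[X]) (n : ℕ), lam ≠ 0 ∧ Irreducible F ∧ 1 ≤ n ∧
        B ^ 2 - Polynomial.C (4 * (k : ℚ) ^ 2) * C = Polynomial.C lam * F ^ n := by
  intro B hB k hk
  have hno := no_pt C hC hdegC hΔ htriv
  have hk' : (k : ℚ) ≠ 0 := by exact_mod_cast hk
  have hc : (4 * (k : ℚ) ^ 2) ≠ 0 := by positivity
  set c : ℚ := 4 * (k : ℚ) ^ 2 with hcdef
  set D := B ^ 2 - Polynomial.C c * C with hD
  have hcC : (Polynomial.C c * C).natDegree = 3 := by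
    rw [natDegree_C_mul hc, hdegC]
  have hDpos : 1 ≤ D.natDegree := by
    by_contra hlt
    have h0 : D.natDegree = 0 := by omega
    have hB2 : B ^ 2 = D + Polynomial.C c * C := by rw [hD]; ring
    have h3 : (B ^ 2).natDegree = 3 := by
      rw [hB2, natDegree_add_eq_right_of_natDegree_lt, hcC]
      omega
    rw [natDegree_pow] at h3
    omega
  have hD4 : D.natDegree ≤ 4 := by
    refine (natDegree_sub_le _ _).trans ?_
    rw [hcC, natDegree_pow]
    exact max_le (by omega) (by omega)
  have hD0 : D ≠ 0 := by intro h; rw [h] at hDpos; simp at hDpos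
  have key : ∀ u : ℚ[X], u ∣ D → 1 ≤ u.natDegree → u.natDegree ≤ 2 → False := by
    intro u hu h1 h2
    refine no_fac C hdegC hno u (Polynomial.C (1 / (2 * (k : ℚ))) * B) h1 h2 ?_
    have : (Polynomial.C (1 / (2 * (k : ℚ))) * B) ^ 2 - C = Polynomial.C (1 / c) * D := by
      have e1 : (1 / (2 * (k : ℚ))) ^ 2 = 1 / c := by rw [hcdef]; field_simp; norm_num
      have e2 : Polynomial.C (1 / c) * Polynomial.C c = 1 := by
        rw [← C_mul, one_div_mul_cancel hc, C_1]
      rw [mul_pow, ← C_pow, e1, hD]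
      linear_combination C * e2
    rw [this]
    exact hu.mul_left _
  refine ⟨1, D, 1, one_ne_zero, ?_, le_rfl, by simp⟩
  refine ⟨fun h => ?_, fun u v huv => ?_⟩
  · have := natDegree_eq_zero_of_isUnit h
    omega
  · have hu0 : u ≠ 0 := by rintro rfl; simp at huv; exact hD0 huv
    have hv0 : v ≠ 0 := by rintro rfl; simp at huv; exact hD0 huv
    have hs : D.natDegree = u.natDegree + v.natDegree := by rw [huv, natDegree_mul hu0 hv0]
    have hu := key u ⟨v, huv⟩
    have hv := key v ⟨u, by rw [huv, mul_comm]⟩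
    have hcase : u.natDegree = 0 ∨ v.natDegree = 0 := by
      by_contra hcon
      push Not at hcon
      by_cases h : u.natDegree ≤ 2
      · exact hu (by omega) h
      · exact hv (by omega) (by omega)
    rcases hcase with h | h
    · left
      rw [Polynomial.isUnit_iff_degree_eq_zero, degree_eq_natDegree hu0, h]; rfl
    · right
      rw [Polynomial.isUnit_iff_degree_eq_zero, degree_eq_natDegree hv0, h]; rfl


end
end
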